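/- Given any sequence ⟨X_n : n < ω⟩ of infinite block sequences satisfying X_{n+1} ⊆* FU(X_n) for all n < ω, there exists an infinite block sequence X such that X ⊆* FU(X_n) for all n < ω; moreover X can be chosen so that for every n < ω, all but finitely many elements of X lie in FU(X_n), and hence FU of a cofinite subset of X is contained in FU(X_n). -/

import Mathlib

/-- `FU X` is the set of all unions `⋃_{x ∈ F} x` where `F` ranges over the
nonempty finite subsets of `X`. -/
def FU (X : Set (Finset ℕ)) : Set (Finset ℕ) :=
  {s | ∃ F : Finset (Finset ℕ), F.Nonempty ∧ ↑F ⊆ X ∧ s = F.sup id}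

/-- A block sequence: an infinite family of nonempty finite subsets of ω such that
any two distinct members are separated (`max x < min y` or `max y < min x`). -/
def IsBlockSeq (X : Set (Finset ℕ)) : Prop :=
  X.Infinite ∧ (∀ x ∈ X, x.Nonempty) ∧
    ∀ x ∈ X, ∀ y ∈ X, x ≠ y →
      (∀ m ∈ x, ∀ n ∈ y, m < n) ∨ (∀ m ∈ y, ∀ n ∈ x, m < n)

/-- `A ⊆* B`: all but finitely many elements of `A` lie in `B`. -/
def AlmostSubset (A B : Set (Finset ℕ)) : Prop := (A \ B).Finite

/-! All but finitely many members of a block sequence lie to the right of a given `N`, so the almost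
inclusions can be read modulo the filter of blocks escaping to infinity. If `A ⊆ FU B` modulo this
filter then `FU A ⊆ FU B` modulo this filter, because a union lies to the right of `N` exactly when
its pieces do. Hence the sets `FU (X n)` decrease modulo a countably generated filter and each of
them meets every set of the filter, so some sequence of blocks converges along the filter and
eventually enters every `FU (X n)`. As its terms escape to infinity, it has a subsequence of
pairwise separated blocks. -/

open Filter Set

theorem FU_eq_supClosure (X : Set (Finset ℕ)) : FU X = supClosure X := by
  ext s
  constructor <;> rintro ⟨F, hF, hFX, rfl⟩ <;> exact ⟨F, hF, hFX, Finset.sup'_eq_sup hF id⟩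

theorem subset_FU (X : Set (Finset ℕ)) : X ⊆ FU X :=
  FU_eq_supClosure X ▸ subset_supClosure

theorem supClosed_FU (X : Set (Finset ℕ)) : SupClosed (FU X) :=
  FU_eq_supClosure X ▸ supClosed_supClosure

theorem FU_subset_FU {A X : Set (Finset ℕ)} (h : A ⊆ FU X) : FU A ⊆ FU X :=
  FU_eq_supClosure A ▸ supClosure_min h (supClosed_FU X)

theorem AlmostSubset.exists_FU_subset {A X : Set (Finset ℕ)} (h : AlmostSubset A (FU X)) :
    ∃ A' ⊆ A, (A \ A').Finite ∧ FU A' ⊆ FU X :=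
  ⟨A ∩ FU X, inter_subset_left, by rwa [sdiff_self_inter], FU_subset_FU inter_subset_right⟩

theorem almostSubset_range {ι : Type*} {y : ι → Finset ℕ} {B : Set (Finset ℕ)}
    (h : ∀ᶠ k in cofinite, y k ∈ B) : AlmostSubset (range y) B := by
  refine ((eventually_cofinite.1 h).image y).subset ?_
  rintro _ ⟨⟨k, rfl⟩, hk⟩
  exact ⟨k, hk, rfl⟩

/-- The filter of nonempty finite sets escaping to infinity: a property holds eventually along it
iff it holds for all nonempty sets to the right of some `N`. The empty set is excluded by hand, as
it lies vacuously to the right of every `N`. -/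
def blockAtTop : Filter (Finset ℕ) :=
  ⨅ N : ℕ, 𝓟 {x | x.Nonempty ∧ ∀ i ∈ x, N ≤ i}

instance : blockAtTop.IsCountablyGenerated :=
  inferInstanceAs (⨅ N : ℕ, 𝓟 {x : Finset ℕ | x.Nonempty ∧ ∀ i ∈ x, N ≤ i}).IsCountablyGenerated

theorem hasBasis_blockAtTop :
    blockAtTop.HasBasis (fun _ : ℕ => True) fun N => {x | x.Nonempty ∧ ∀ i ∈ x, N ≤ i} :=
  hasBasis_iInf_principal <| Antitone.directed_ge fun _ _ hMN _ hx =>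
    ⟨hx.1, fun i hi => hMN.trans (hx.2 i hi)⟩

theorem eventually_blockAtTop_nonempty : ∀ᶠ x in blockAtTop, x.Nonempty :=
  hasBasis_blockAtTop.eventually_iff.2 ⟨0, trivial, fun _ hx => hx.1⟩

theorem eventually_blockAtTop_forall_lt (s : Finset ℕ) :
    ∀ᶠ x in blockAtTop, ∀ i ∈ s, ∀ j ∈ x, i < j :=
  hasBasis_blockAtTop.eventually_iff.2 ⟨s.sup id + 1, trivial, fun _ hx _ hi j hj =>
    (Nat.lt_succ_of_le (Finset.le_sup (f := id) hi)).trans_le (hx.2 j hj)⟩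

theorem blockAtTop_le_cofinite : blockAtTop ≤ cofinite := by
  refine le_cofinite_iff_eventually_ne.2 fun s => ?_
  filter_upwards [eventually_blockAtTop_nonempty, eventually_blockAtTop_forall_lt s]
  rintro x ⟨i, hi⟩ hlt rfl
  exact lt_irrefl i (hlt i hi i hi)

theorem AlmostSubset.eventuallyLE {A B : Set (Finset ℕ)} (h : AlmostSubset A B) :
    A ≤ᶠ[blockAtTop] B := by
  filter_upwards [blockAtTop_le_cofinite h.compl_mem_cofinite] with x hx hxA
  exact not_not.1 fun hxB => hx ⟨hxA, hxB⟩

theorem IsBlockSeq.frequently_mem {X : Set (Finset ℕ)} (hX : IsBlockSeq X) :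
    ∃ᶠ x in blockAtTop, x ∈ X := by
  obtain ⟨hinf, hne, hsep⟩ := hX
  refine hasBasis_blockAtTop.frequently_iff.2 fun {N} _ => ?_
  have hfiber : ∀ i, {x ∈ X | i ∈ x}.Subsingleton := by
    rintro i x ⟨hx, hix⟩ y ⟨hy, hiy⟩
    by_contra hxy
    rcases hsep x hx y hy hxy with h | h
    · exact lt_irrefl i (h i hix i hiy)
    · exact lt_irrefl i (h i hiy i hix)
  have hfin : (⋃ i ∈ Iio N, {x ∈ X | i ∈ x}).Finite :=
    (finite_Iio N).biUnion fun i _ => (hfiber i).finite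
  obtain ⟨x, hx, hxN⟩ := (hinf.sdiff hfin).nonempty
  refine ⟨x, ⟨hne x hx, fun i hi => not_lt.1 fun hiN => hxN ?_⟩, hx⟩
  exact mem_biUnion hiN ⟨hx, hi⟩

theorem FU_eventuallyLE_FU {A X : Set (Finset ℕ)} (h : A ≤ᶠ[blockAtTop] FU X) :
    FU A ≤ᶠ[blockAtTop] FU X := by
  obtain ⟨N, -, hN⟩ := hasBasis_blockAtTop.eventually_iff.1 h
  refine hasBasis_blockAtTop.eventually_iff.2 ⟨N, trivial, ?_⟩
  rintro _ ⟨⟨i, hi⟩, hle⟩ ⟨F, -, hFA, rfl⟩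
  obtain ⟨x, hxF, hix⟩ := Finset.mem_sup.1 hi
  rw [← Finset.sup_erase_bot] at hle ⊢
  have hxne : x ≠ ∅ := Finset.ne_empty_of_mem hix
  refine (supClosed_FU X).finsetSup_mem ⟨x, Finset.mem_erase.2 ⟨hxne, hxF⟩⟩ fun y hy => ?_
  have ⟨hyne, hyF⟩ := Finset.mem_erase.1 hy
  exact hN ⟨Finset.nonempty_iff_ne_empty.2 hyne, fun j hj => hle j (Finset.le_sup (f := id) hy hj)⟩
    (hFA hyF)

theorem exists_seq_tendsto_forall_eventually_mem {α : Type*} {l : Filter α}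
    [l.IsCountablyGenerated] {S : ℕ → Set α} (hS : ∀ n, S (n + 1) ≤ᶠ[l] S n)
    (hfreq : ∀ n, ∃ᶠ x in l, x ∈ S n) :
    ∃ x : ℕ → α, Tendsto x atTop l ∧ ∀ n, ∀ᶠ k in atTop, x k ∈ S n := by
  have hanti : Antitone fun n => l ⊓ 𝓟 (S n) := antitone_nat_of_succ_le fun n =>
    le_inf inf_le_left (le_principal_iff.2 (mem_inf_principal.2 (hS n)))
  have : (⨅ n, l ⊓ 𝓟 (S n)).NeBot :=
    iInf_neBot_of_directed' hanti.directed_ge fun n => frequently_mem_iff_neBot.1 (hfreq n)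
  obtain ⟨x, hx⟩ := exists_seq_tendsto (⨅ n, l ⊓ 𝓟 (S n))
  have hx' : ∀ n, Tendsto x atTop l ∧ ∀ᶠ k in atTop, x k ∈ S n := fun n =>
    (tendsto_inf.1 (tendsto_iInf.1 hx n)).imp_right tendsto_principal.1
  exact ⟨x, (hx' 0).1, fun n => (hx' n).2⟩

theorem isBlockSeq_range {ι : Type*} [LinearOrder ι] [Infinite ι] {y : ι → Finset ℕ}
    (hne : ∀ a, (y a).Nonempty) (hlt : ∀ a b, a < b → ∀ i ∈ y a, ∀ j ∈ y b, i < j) :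
    IsBlockSeq (range y) := by
  have hinj : y.Injective := Function.Injective.of_lt_imp_ne fun a b hab heq => by
    obtain ⟨i, hi⟩ := hne a
    exact lt_irrefl i (hlt a b hab i hi i (heq ▸ hi))
  refine ⟨infinite_range_of_injective hinj, forall_mem_range.2 hne, ?_⟩
  rintro _ ⟨a, rfl⟩ _ ⟨b, rfl⟩ hab
  exact (ne_of_apply_ne y hab).lt_or_gt.imp (hlt a b) (hlt b a)

theorem exists_strictMono_isBlockSeq_range {x : ℕ → Finset ℕ} (hx : Tendsto x atTop blockAtTop) :
    ∃ φ : ℕ → ℕ, StrictMono φ ∧ IsBlockSeq (range (x ∘ φ)) := by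
  obtain ⟨φ, hne, hφ⟩ := exists_seq_of_forall_finset_exists (fun a => (x a).Nonempty)
    (fun a b => a < b ∧ ∀ i ∈ x a, ∀ j ∈ x b, i < j) fun s _ => by
      have hright : ∀ᶠ b in atTop, ∀ a ∈ s, a < b ∧ ∀ i ∈ x a, ∀ j ∈ x b, i < j :=
        s.eventually_all.2 fun a _ =>
          (eventually_gt_atTop a).and (hx.eventually (eventually_blockAtTop_forall_lt (x a)))
      exact ((hx.eventually eventually_blockAtTop_nonempty).and hright).exists
  exact ⟨φ, fun a b hab => (hφ a b hab).1, isBlockSeq_range hne fun a b hab => (hφ a b hab).2⟩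

theorem exists_pseudointersection_blockSeq_general (X : ℕ → Set (Finset ℕ))
    (hfreq : ∀ n, ∃ᶠ x in blockAtTop, x ∈ X n)
    (hsub : ∀ n, X (n + 1) ≤ᶠ[blockAtTop] FU (X n)) :
    ∃ Y : Set (Finset ℕ), IsBlockSeq Y ∧
      ∀ n, AlmostSubset Y (FU (X n)) ∧
        ∃ Y' ⊆ Y, (Y \ Y').Finite ∧ FU Y' ⊆ FU (X n) := by
  obtain ⟨x, hx, hmem⟩ := exists_seq_tendsto_forall_eventually_mem
    (fun n => FU_eventuallyLE_FU (hsub n)) fun n => (hfreq n).mono fun _ h => subset_FU _ h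
  obtain ⟨φ, hφ, hblock⟩ := exists_strictMono_isBlockSeq_range hx
  have halmost : ∀ n, AlmostSubset (range (x ∘ φ)) (FU (X n)) := fun n =>
    almostSubset_range (Nat.cofinite_eq_atTop ▸ hφ.tendsto_atTop.eventually (hmem n))
  exact ⟨range (x ∘ φ), hblock, fun n => ⟨halmost n, (halmost n).exists_FU_subset⟩⟩

/-- Given a sequence `⟨X n⟩` of infinite block sequences with
`X (n+1) ⊆* FU (X n)` for all `n`, there is an infinite block sequence `X` with
`X ⊆* FU (X n)` for all `n`; moreover, for every `n` some cofinite subset `X'` of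
`X` satisfies `FU X' ⊆ FU (X n)`. -/
theorem exists_pseudointersection_blockSeq (X : ℕ → Set (Finset ℕ))
    (hblock : ∀ n, IsBlockSeq (X n))
    (hsub : ∀ n, AlmostSubset (X (n + 1)) (FU (X n))) :
    ∃ Y : Set (Finset ℕ), IsBlockSeq Y ∧
      ∀ n, AlmostSubset Y (FU (X n)) ∧
        ∃ Y' ⊆ Y, (Y \ Y').Finite ∧ FU Y' ⊆ FU (X n) :=
  exists_pseudointersection_blockSeq_general X (fun n => (hblock n).frequently_mem)
    fun n => (hsub n).eventuallyLE
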